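/- arXiv:1705.06838 — 4 statements merged into one kernel-verified Lean document; each statement's English description precedes it below -/
import Mathlib

section
/- For every r ≥ 1 and every function f : N^r → X whose image {f(z) : z ∈ N^r} is finite, there exists an infinite subset H = {h_0, h_1, ...} ⊆ N such that f is constant on each order-equivalence class of H^r. -/
open scoped Classical

/-- The maximum coordinate of a `k`-tuple of nonnegative integers. -/
def maxv {k : ℕ} (z : Fin k → ℕ) : ℕ := Finset.univ.sup z

/-- The minimum coordinate of a `k`-tuple of nonnegative integers. -/
noncomputable def minv {k : ℕ} (z : Fin k → ℕ) : ℕ := sInf (Set.range z)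

/-- A directed graph `(N^k, Θ)` is downward directed if every edge `(x, y)`
satisfies `max(x) > max(y)`. -/
def Downward {k : ℕ} (Θ : Set ((Fin k → ℕ) × (Fin k → ℕ))) : Prop :=
  ∀ e ∈ Θ, maxv e.2 < maxv e.1

/-- Two `k`-tuples are order equivalent if they have the same order type:
corresponding coordinates compare the same way. -/
def OrdEquiv {k : ℕ} (x y : Fin k → ℕ) : Prop :=
  ∀ i j : Fin k, (x i < x j ↔ y i < y j) ∧ (x i = x j ↔ y i = y j)

lemma ultra_lim {K : Type*} [Finite K] (U : Ultrafilter ℕ) (g : ℕ → K) :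
    ∃ a, ∀ᶠ m in (U : Filter ℕ), g m = a := by
  obtain ⟨a, ha⟩ := Ultrafilter.eq_pure_of_finite (U.map g)
  refine ⟨a, ?_⟩
  have h : ({a} : Set K) ∈ U.map g := by
    rw [ha]; exact Ultrafilter.mem_pure.2 rfl
  exact h

lemma card_image_aux {ι : Type*} (A : Finset ι) (x y : ι → ℕ)
    (h : ∀ i j, x i = x j ↔ y i = y j) : (A.image x).card = (A.image y).card := by
  have key : ∀ x y : ι → ℕ, (∀ i j, x i = x j ↔ y i = y j) →
      (A.image y).card ≤ (A.image x).card := by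
    intro x y h
    have hf : Function.FactorsThrough y x := fun i j hij => (h i j).1 hij
    have : A.image y = (A.image x).image (Function.extend x y (fun _ => 0)) := by
      rw [Finset.image_image]
      refine Finset.image_congr ?_
      intro i _
      exact (hf.extend_apply _ i).symm
    rw [this]
    exact Finset.card_image_le
  exact le_antisymm (key y x fun i j => (h i j).symm) (key x y h)

/-- Ramsey on finite subsets, all sizes up to `r` at once. -/
lemma ramsey_aux {K : Type*} [Finite K] (r : ℕ) (c : Finset ℕ → K) :
    ∃ S : ℕ → Finset ℕ, Monotone S ∧ (∀ i, (S i).card = i) ∧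
      ∃ b : ℕ → K, ∀ i, ∀ s ⊆ S i, s.card ≤ r → c s = b s.card := by
  choose L hL using fun g : ℕ → K => ultra_lim (Filter.hyperfilter ℕ) g
  let D : ℕ → Finset ℕ → K := fun k => Nat.rec c (fun _ d s => L fun m => d (insert m s)) k
  have hD : ∀ k s, ∀ᶠ m in (Filter.hyperfilter ℕ : Filter ℕ),
      D k (insert m s) = D (k+1) s := fun k s => hL _
  have hp : ∀ S : Finset ℕ, ∃ p, p ∉ S ∧ ∀ s ∈ S.powerset, ∀ k ∈ Finset.range r,
      D k (insert p s) = D (k+1) s := by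
    intro S
    have h1 : ∀ᶠ m in (Filter.hyperfilter ℕ : Filter ℕ), m ∉ S :=
      Set.Finite.compl_mem_hyperfilter S.finite_toSet
    have h2 : ∀ᶠ m in (Filter.hyperfilter ℕ : Filter ℕ), ∀ s ∈ S.powerset,
        ∀ k ∈ Finset.range r, D k (insert m s) = D (k+1) s := by
      rw [Filter.eventually_all_finset]
      intro s _
      rw [Filter.eventually_all_finset]
      intro k _
      exact hD k s
    exact (h1.and h2).exists
  choose p hp1 hp2 using hp
  let S : ℕ → Finset ℕ := fun i => Nat.rec ∅ (fun _ T => insert (p T) T) i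
  have hS : ∀ i, S (i+1) = insert (p (S i)) (S i) := fun i => rfl
  refine ⟨S, monotone_nat_of_le_succ fun i => ?_, ?_, fun j => D j ∅, ?_⟩
  · rw [hS]; exact Finset.subset_insert _ _
  · intro i
    induction i with
    | zero => rfl
    | succ i ih => rw [hS, Finset.card_insert_of_notMem (hp1 _), ih]
  · have key : ∀ i, ∀ s ⊆ S i, ∀ k, k + s.card ≤ r → D k s = D (k + s.card) ∅ := by
      intro i
      induction i with
      | zero =>
        intro s hs k _
        have : s = ∅ := Finset.subset_empty.1 hs
        subst this
        simp
      | succ i ih =>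
        intro s hs k hk
        rw [hS] at hs
        by_cases hps : p (S i) ∈ s
        · have hsub : s.erase (p (S i)) ⊆ S i := Finset.subset_insert_iff.1 hs
          have hc := Finset.card_erase_add_one hps
          have h1 := hp2 (S i) (s.erase (p (S i))) (Finset.mem_powerset.2 hsub) k
            (Finset.mem_range.2 (by omega))
          rw [Finset.insert_erase hps] at h1
          rw [h1, ih _ hsub (k+1) (by omega), ← hc, Nat.add_assoc,
            Nat.add_comm 1]
        · exact ih s ((Finset.subset_insert_iff_of_notMem hps).1 hs) k hk
    intro i s hs hr
    have := key i s hs 0 (by omega)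
    rw [Nat.zero_add] at this
    exact this

/-- Ramsey's theorem version: for every `r ≥ 1` and every
`f : N^r → X` with finite image, there is an infinite `H ⊆ N` such that `f` is
constant on the order equivalence classes of `H^r`. -/
theorem stmt0 {X : Type*} (r : ℕ) (hr : 1 ≤ r) (f : (Fin r → ℕ) → X)
    (hf : (Set.range f).Finite) :
    ∃ H : Set ℕ, H.Infinite ∧
      ∀ x y : Fin r → ℕ, (∀ i, x i ∈ H) → (∀ i, y i ∈ H) → OrdEquiv x y →
        f x = f y := by
  have : Finite (Set.range f) := hf
  let c : Finset ℕ → ((Fin r → Fin (r+1)) → Set.range f) := fun s e =>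
    ⟨f fun i => Nat.nth (· ∈ s) (e i), Set.mem_range_self _⟩
  obtain ⟨S, hmono, hcard, b, hb⟩ := ramsey_aux r c
  refine ⟨⋃ i, (S i : Set ℕ), ?_, ?_⟩
  · intro hfin
    have hsub : S (hfin.toFinset.card + 1) ⊆ hfin.toFinset := by
      intro a ha
      rw [Set.Finite.mem_toFinset]
      exact Set.mem_iUnion.2 ⟨_, ha⟩
    have := Finset.card_le_card hsub
    rw [hcard] at this
    omega
  · intro x y hx hy hxy
    have hin : ∀ x : Fin r → ℕ, (∀ i, x i ∈ ⋃ i, (S i : Set ℕ)) →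
        c (Finset.univ.image x) = b (Finset.univ.image x).card := by
      intro x hx
      choose n hn using fun i => Set.mem_iUnion.1 (hx i)
      refine hb (Finset.univ.sup n) _ ?_ ?_
      · intro a ha
        obtain ⟨i, _, rfl⟩ := Finset.mem_image.1 ha
        exact hmono (Finset.le_sup (Finset.mem_univ i)) (hn i)
      · exact Finset.card_image_le.trans (by simp)
    have hle : ∀ (A : Finset (Fin r)) (x : Fin r → ℕ), (A.image x).card < r + 1 := fun A x =>
      Nat.lt_succ_of_le (Finset.card_image_le.trans (by simpa using Finset.card_le_univ A))
    let e : Fin r → Fin (r+1) := fun i =>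
      ⟨((Finset.univ.filter fun j => x j < x i).image x).card, hle _ _⟩
    have hcount : ∀ (x : Fin r → ℕ) i, Nat.nth (· ∈ Finset.univ.image x)
        ((Finset.univ.filter fun j => x j < x i).image x).card = x i := by
      intro x i
      have h1 : ((Finset.univ.filter fun j => x j < x i).image x).card
          = Nat.count (· ∈ Finset.univ.image x) (x i) := by
        rw [Nat.count_eq_card_filter_range]
        congr 1
        ext a
        simp only [Finset.mem_image, Finset.mem_filter, Finset.mem_univ, true_and,
          Finset.mem_range]
        constructor
        · rintro ⟨j, hj, rfl⟩; exact ⟨hj, j, rfl⟩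
        · rintro ⟨hj, j, rfl⟩; exact ⟨j, hj, rfl⟩
      rw [h1]
      exact Nat.nth_count (p := (· ∈ Finset.univ.image x))
        (Finset.mem_image_of_mem x (Finset.mem_univ i))
    have hcx : ((c (Finset.univ.image x) e : Set.range f) : X) = f x := by
      change f _ = f x
      congr 1
      funext i
      exact hcount x i
    have hcy : ((c (Finset.univ.image y) e : Set.range f) : X) = f y := by
      change f _ = f y
      congr 1
      funext i
      have h2 : ((Finset.univ.filter fun j => x j < x i).image x).card =
          ((Finset.univ.filter fun j => y j < y i).image y).card := by
        rw [card_image_aux _ x y fun i j => (hxy i j).2]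
        simp only [(hxy _ _).1]
      change Nat.nth _ ((Finset.univ.filter fun j => x j < x i).image x).card = y i
      rw [h2]
      exact hcount y i
    rw [← hcx, ← hcy, hin x hx, hin y hy, card_image_aux _ x y fun i j => (hxy i j).2]
end

section
/- Let k ≥ 2 and let G = (N^k, Θ) be a downward directed graph. Then there exists an infinite subset H = {h_0, h_1, ...} ⊆ N (listed in increasing order) such that for all z in D = H^k, either p̂_D(z) = h_0 < min(z) or p̂_D(z) ≥ min(z). Consequently p̂_D has at most one significant label: |{p̂_D(z) : z ∈ D, p̂_D(z) < min(z)}| ≤ 1. -/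
open scoped Classical

/-- `(a, b)` is an edge of the induced subgraph `G_D`. -/
def EdgeD {k : ℕ} (Θ : Set ((Fin k → ℕ) × (Fin k → ℕ))) (D : Set (Fin k → ℕ))
    (a b : Fin k → ℕ) : Prop :=
  a ∈ D ∧ b ∈ D ∧ (a, b) ∈ Θ

/-- A path in `G_D`: a nonempty sequence of distinct vertices of `D` with
consecutive pairs being edges. -/
def IsPathD {k : ℕ} (Θ : Set ((Fin k → ℕ) × (Fin k → ℕ))) (D : Set (Fin k → ℕ))
    (l : List (Fin k → ℕ)) : Prop :=
  l ≠ [] ∧ l.Nodup ∧ (∀ x ∈ l, x ∈ D) ∧ l.Chain' (fun a b => (a, b) ∈ Θ)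

/-- There is a path in `G_D` from `z` to `x` (possibly the trivial path `(z)`). -/
def PathFrom {k : ℕ} (Θ : Set ((Fin k → ℕ) × (Fin k → ℕ))) (D : Set (Fin k → ℕ))
    (z x : Fin k → ℕ) : Prop :=
  ∃ l : List (Fin k → ℕ), IsPathD Θ D l ∧ l.head? = some z ∧ l.getLast? = some x

/-- `z` is a terminal vertex of `G_D`: it has no out-neighbor in `G_D`. -/
def TerminalV {k : ℕ} (Θ : Set ((Fin k → ℕ) × (Fin k → ℕ))) (D : Set (Fin k → ℕ))
    (z : Fin k → ℕ) : Prop :=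
  ∀ y, ¬ EdgeD Θ D z y

/-- `P_D(z)`: the set of vertices reachable from `z` by a path in `G_D`. -/
def PD {k : ℕ} (Θ : Set ((Fin k → ℕ) × (Fin k → ℕ))) (D : Set (Fin k → ℕ))
    (z : Fin k → ℕ) : Set (Fin k → ℕ) :=
  {x | PathFrom Θ D z x}

/-- The total path label `p_D(z) = min { min(x) : x ∈ P_D(z) }`. -/
noncomputable def pD {k : ℕ} (Θ : Set ((Fin k → ℕ) × (Fin k → ℕ))) (D : Set (Fin k → ℕ))
    (z : Fin k → ℕ) : ℕ :=
  sInf {n | ∃ x ∈ PD Θ D z, minv x = n}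

/-- `p̂_D(z) = max(z)` if `z` is terminal in `G_D`, else `p̂_D(z) = p_D(z)`. -/
noncomputable def phatD {k : ℕ} (Θ : Set ((Fin k → ℕ) × (Fin k → ℕ))) (D : Set (Fin k → ℕ))
    (z : Fin k → ℕ) : ℕ :=
  if TerminalV Θ D z then maxv z else pD Θ D z

/-- A terminal path of `G_D`: a path that cannot be extended. -/
def IsTermPathD {k : ℕ} (Θ : Set ((Fin k → ℕ) × (Fin k → ℕ))) (D : Set (Fin k → ℕ))
    (l : List (Fin k → ℕ)) : Prop :=
  IsPathD Θ D l ∧ ∀ x, ¬ IsPathD Θ D (l ++ [x])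

/-- `T_D(z)`: the set of last vertices of terminal paths of `G_D` starting at `z`. -/
def TD {k : ℕ} (Θ : Set ((Fin k → ℕ) × (Fin k → ℕ))) (D : Set (Fin k → ℕ))
    (z : Fin k → ℕ) : Set (Fin k → ℕ) :=
  {x | ∃ l : List (Fin k → ℕ), IsTermPathD Θ D l ∧ l.head? = some z ∧ l.getLast? = some x}

/-- The terminal path label function `t̂_D`:
`t̂_D(z) = max(z)` if `z` is terminal, else `t̂_D(z) = min { min(x) : x ∈ T_D(z) }`. -/
noncomputable def tD {k : ℕ} (Θ : Set ((Fin k → ℕ) × (Fin k → ℕ))) (D : Set (Fin k → ℕ))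
    (z : Fin k → ℕ) : ℕ :=
  if TerminalV Θ D z then maxv z else sInf {n | ∃ x ∈ TD Θ D z, minv x = n}

theorem ramsey_aux_s1 {κ : Type} [Finite κ] (n : ℕ) : ∀ (c : Finset ℕ → κ) (A : Set ℕ), A.Infinite →
    ∃ B : Set ℕ, B ⊆ A ∧ B.Infinite ∧ ∃ d, ∀ s : Finset ℕ, (∀ v ∈ s, v ∈ B) → s.card = n → c s = d := by
  induction n with
  | zero =>
    intro c A hA
    refine ⟨A, subset_rfl, hA, c ∅, ?_⟩
    intro s _ hs
    rw [Finset.card_eq_zero.mp hs]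
  | succ n ih =>
    intro c A hA
    have step : ∀ X : {X : Set ℕ // X.Infinite}, ∃ Y : {X : Set ℕ // X.Infinite}, ∃ d : κ,
        (∀ v ∈ Y.1, v ∈ X.1 ∧ sInf X.1 < v) ∧
        ∀ s : Finset ℕ, (∀ v ∈ s, v ∈ Y.1) → s.card = n → c (insert (sInf X.1) s) = d := by
      intro X
      have hinf : (X.1 \ Set.Iic (sInf X.1)).Infinite := X.2.diff (Set.finite_Iic _)
      obtain ⟨B, hB, hBi, d, hd⟩ := ih (fun s => c (insert (sInf X.1) s)) _ hinf
      refine ⟨⟨B, hBi⟩, d, ?_, hd⟩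
      intro v hv
      have := hB hv
      exact ⟨this.1, by simpa using this.2⟩
    choose F d hF hd using step
    let S : ℕ → {X : Set ℕ // X.Infinite} := fun i => Nat.rec ⟨A, hA⟩ (fun _ X => F X) i
    have hS : ∀ i, S (i+1) = F (S i) := fun i => rfl
    let a : ℕ → ℕ := fun i => sInf (S i).1
    have ha : ∀ i, a i ∈ (S i).1 := fun i => Nat.sInf_mem (S i).2.nonempty
    have hanti : ∀ i j, i ≤ j → (S j).1 ⊆ (S i).1 := by
      intro i j hij
      induction hij with
      | refl => exact subset_rfl
      | step _ ihj => exact fun v hv => ihj (hF _ v hv).1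
    have hmono : StrictMono a := strictMono_nat_of_lt_succ
      (fun i => (hF (S i) (a (i+1)) (ha (i+1))).2)
    obtain ⟨col, hcol⟩ := Finite.exists_infinite_fiber (fun i => d (S i))
    refine ⟨a '' ((fun i => d (S i)) ⁻¹' {col}), ?_, ?_, col, ?_⟩
    · rintro _ ⟨i, _, rfl⟩
      exact hanti 0 i (Nat.zero_le _) (ha i)
    · exact (Set.infinite_coe_iff.mp hcol).image hmono.injective.injOn
    · intro s hs hcard
      have hne : s.Nonempty := by
        rw [← Finset.card_pos]; omega
      obtain ⟨i, hi, hi2⟩ := hs _ (s.min'_mem hne)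
      have h1 : s = insert (a i) (s.erase (a i)) := by
        rw [Finset.insert_erase]; rw [hi2]; exact s.min'_mem hne
      rw [h1]
      have h2 := hd (S i) (s.erase (a i)) ?_ ?_
      · rw [← hi]; exact h2
      · intro v hv
        have hvs := Finset.mem_of_mem_erase hv
        have hvne := Finset.ne_of_mem_erase hv
        obtain ⟨j, _, rfl⟩ := hs v hvs
        have hle : a i ≤ a j := by rw [hi2]; exact s.min'_le _ hvs
        have hij : i < j := hmono.lt_iff_lt.mp (lt_of_le_of_ne hle (Ne.symm hvne))
        exact hanti (i+1) j hij (ha j)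
      · rw [Finset.card_erase_of_mem (by rw [hi2]; exact s.min'_mem hne)]; omega

theorem ramsey_le {κ : Type} [Finite κ] (c : Finset ℕ → κ) (N : ℕ) :
    ∃ B : Set ℕ, B.Infinite ∧ ∀ s t : Finset ℕ, (∀ v ∈ s, v ∈ B) → (∀ v ∈ t, v ∈ B) →
      s.card = t.card → s.card ≤ N → c s = c t := by
  induction N with
  | zero =>
    refine ⟨Set.univ, Set.infinite_univ, ?_⟩
    intro s t _ _ h h0
    have hs : s = ∅ := Finset.card_eq_zero.mp (by omega)
    have ht : t = ∅ := Finset.card_eq_zero.mp (by omega)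
    rw [hs, ht]
  | succ N ih =>
    obtain ⟨A, hA, h⟩ := ih
    obtain ⟨B, hBA, hB, d, hd⟩ := ramsey_aux_s1 (N+1) c A hA
    refine ⟨B, hB, ?_⟩
    intro s t hs ht hst hle
    by_cases hN : s.card = N + 1
    · rw [hd s hs hN, hd t ht (by omega)]
    · exact h s t (fun v hv => hBA (hs v hv)) (fun v hv => hBA (ht v hv)) hst (by omega)

theorem rank_inj (s : Finset ℕ) {u v : ℕ} (hu : u ∈ s) (hv : v ∈ s)
    (h : (s.filter (· < u)).card = (s.filter (· < v)).card) : u = v := by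
  have key : ∀ u v : ℕ, u ∈ s → u < v → (s.filter (· < u)).card < (s.filter (· < v)).card := by
    intro u v hu huv
    apply Finset.card_lt_card
    rw [Finset.ssubset_iff_of_subset]
    · exact ⟨u, by simp [hu, huv], by simp⟩
    · intro w hw
      simp only [Finset.mem_filter] at hw ⊢
      exact ⟨hw.1, by omega⟩
  rcases lt_trichotomy u v with h1 | h1 | h1
  · have := key u v hu h1; omega
  · exact h1
  · have := key v u hv h1; omega

theorem rank_map (s : Finset ℕ) (φ : ℕ → ℕ) (hφ : ∀ u ∈ s, ∀ v ∈ s, u < v → φ u < φ v)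
    {v : ℕ} (hv : v ∈ s) :
    ((s.image φ).filter (· < φ v)).card = (s.filter (· < v)).card := by
  have hinj : Set.InjOn φ s := by
    intro a ha b hb hab
    rcases lt_trichotomy a b with h1 | h1 | h1
    · have := hφ a ha b hb h1; omega
    · exact h1
    · have := hφ b hb a ha h1; omega
  have : (s.image φ).filter (· < φ v) = (s.filter (· < v)).image φ := by
    ext w
    simp only [Finset.mem_filter, Finset.mem_image]
    constructor
    · rintro ⟨⟨u, hu, rfl⟩, h⟩
      refine ⟨u, ⟨hu, ?_⟩, rfl⟩
      by_contra hc
      rcases Nat.lt_or_eq_of_le (not_lt.mp hc) with h1 | h1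
      · have := hφ v hv u hu h1; omega
      · subst h1; omega
    · rintro ⟨u, ⟨hu, h⟩, rfl⟩
      exact ⟨⟨u, hu, rfl⟩, hφ u hu v hv h⟩
  rw [this, Finset.card_image_of_injOn (hinj.mono (by intro x hx; simp at hx; exact hx.1))]

theorem invariant_set (k : ℕ) (Θ : Set ((Fin k → ℕ) × (Fin k → ℕ))) :
    ∃ H : Set ℕ, H.Infinite ∧ ∀ (x y : Fin k → ℕ) (φ : ℕ → ℕ),
      (∀ i, x i ∈ H) → (∀ i, y i ∈ H) → (∀ i, φ (x i) ∈ H) → (∀ i, φ (y i) ∈ H) →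
      (∀ u v, (u ∈ Set.range x ∨ u ∈ Set.range y) → (v ∈ Set.range x ∨ v ∈ Set.range y) →
        u < v → φ u < φ v) →
      (x, y) ∈ Θ → (φ ∘ x, φ ∘ y) ∈ Θ := by
  let c : Finset ℕ → Set ((Fin k → Fin (k + k + 1)) × (Fin k → Fin (k + k + 1))) := fun s =>
    {pq | ∃ x y : Fin k → ℕ, (x, y) ∈ Θ ∧
      (∀ i, x i ∈ s ∧ (s.filter (· < x i)).card = pq.1 i) ∧
      (∀ i, y i ∈ s ∧ (s.filter (· < y i)).card = pq.2 i)}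
  obtain ⟨H, hH, hc⟩ := ramsey_le c (k + k)
  refine ⟨H, hH, ?_⟩
  intro x y φ hx hy hφx hφy hφ hxy
  let s : Finset ℕ := Finset.univ.image x ∪ Finset.univ.image y
  have hs : ∀ v, v ∈ s ↔ (v ∈ Set.range x ∨ v ∈ Set.range y) := by
    intro v; simp [s]
  have hxs : ∀ i, x i ∈ s := fun i => (hs _).2 (Or.inl ⟨i, rfl⟩)
  have hys : ∀ i, y i ∈ s := fun i => (hs _).2 (Or.inr ⟨i, rfl⟩)
  have hcard : s.card ≤ k + k := by
    refine (Finset.card_union_le _ _).trans (Nat.add_le_add ?_ ?_)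
    · exact Finset.card_image_le.trans (by simp)
    · exact Finset.card_image_le.trans (by simp)
  have hφs : ∀ u ∈ s, ∀ v ∈ s, u < v → φ u < φ v := fun u hu v hv =>
    hφ u v ((hs u).1 hu) ((hs v).1 hv)
  have hinj : Set.InjOn φ s := by
    intro a ha b hb hab
    rcases lt_trichotomy a b with h1 | h1 | h1
    · have := hφs a ha b hb h1; omega
    · exact h1
    · have := hφs b hb a ha h1; omega
  have hceq : c s = c (s.image φ) := by
    apply hc
    · intro v hv
      rcases (hs v).1 hv with ⟨i, rfl⟩ | ⟨i, rfl⟩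
      · exact hx i
      · exact hy i
    · intro v hv
      obtain ⟨u, hu, rfl⟩ := Finset.mem_image.1 hv
      rcases (hs u).1 hu with ⟨i, rfl⟩ | ⟨i, rfl⟩
      · exact hφx i
      · exact hφy i
    · rw [Finset.card_image_of_injOn hinj]
    · exact hcard
  have hlt : ∀ v, (s.filter (· < v)).card < k + k + 1 := fun v =>
    Nat.lt_succ_of_le ((Finset.card_filter_le _ _).trans hcard)
  have hmem : ((fun i => ⟨_, hlt (x i)⟩, fun i => ⟨_, hlt (y i)⟩) :
      (Fin k → Fin (k + k + 1)) × (Fin k → Fin (k + k + 1))) ∈ c s :=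
    ⟨x, y, hxy, fun i => ⟨hxs i, rfl⟩, fun i => ⟨hys i, rfl⟩⟩
  rw [hceq] at hmem
  obtain ⟨x', y', hΘ', h1, h2⟩ := hmem
  have e1 : x' = φ ∘ x := by
    funext i
    refine rank_inj (s.image φ) (h1 i).1 (Finset.mem_image_of_mem φ (hxs i)) ?_
    exact (h1 i).2.trans (rank_map s φ hφs (hxs i)).symm
  have e2 : y' = φ ∘ y := by
    funext i
    refine rank_inj (s.image φ) (h2 i).1 (Finset.mem_image_of_mem φ (hys i)) ?_
    exact (h2 i).2.trans (rank_map s φ hφs (hys i)).symm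
  rw [← e1, ← e2]
  exact hΘ'

theorem minv_le' {k : ℕ} (z : Fin k → ℕ) (i : Fin k) : minv z ≤ z i := Nat.sInf_le ⟨i, rfl⟩

theorem path_prefix {k : ℕ} {Θ : Set ((Fin k → ℕ) × (Fin k → ℕ))} {D : Set (Fin k → ℕ)}
    {l : List (Fin k → ℕ)} {z w : Fin k → ℕ} (hl : IsPathD Θ D l) (hz : l.head? = some z)
    (hw : w ∈ l) : PathFrom Θ D z w := by
  obtain ⟨s, t, rfl⟩ := List.append_of_mem hw
  have e : s ++ w :: t = (s ++ [w]) ++ t := by simp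
  rw [e] at hl
  obtain ⟨h1, h2, h3, h4⟩ := hl
  refine ⟨s ++ [w], ⟨by simp, (List.nodup_append.1 h2).1,
    fun x hx => h3 x (List.mem_append_left _ hx), ?_⟩, ?_, by simp⟩
  · exact List.IsChain.left_of_append h4
  · cases s <;> simpa using hz

theorem path_map {k : ℕ} {Θ : Set ((Fin k → ℕ) × (Fin k → ℕ))} {D : Set (Fin k → ℕ)}
    {l : List (Fin k → ℕ)} {z w : Fin k → ℕ} (g : (Fin k → ℕ) → (Fin k → ℕ))
    (hl : IsPathD Θ D l) (hz : l.head? = some z) (hw : l.getLast? = some w)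
    (hD : ∀ x ∈ l, g x ∈ D) (hinj : ∀ x ∈ l, ∀ y ∈ l, g x = g y → x = y)
    (hΘ : ∀ x ∈ l, ∀ y ∈ l, (x, y) ∈ Θ → (g x, g y) ∈ Θ) : PathFrom Θ D (g z) (g w) := by
  obtain ⟨h1, h2, h3, h4⟩ := hl
  refine ⟨l.map g, ⟨by simpa using h1, ?_, ?_, ?_⟩, by simp [hz], by simp [hw]⟩
  · exact h2.map_on hinj
  · simpa using hD
  · have h5 : List.IsChain (fun a b => (a, b) ∈ Θ) l := h4
    change List.IsChain _ _
    rw [List.isChain_map]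
    clear h1 h2 h3 h4 hz hw hD hinj
    induction h5 with
    | nil => simp
    | singleton => simp
    | cons_cons hab _ ih =>
      refine List.IsChain.cons_cons ?_ (ih ?_)
      · exact hΘ _ (by simp) _ (by simp) hab
      · exact fun x hx y hy => hΘ x (List.mem_cons_of_mem _ hx) y (List.mem_cons_of_mem _ hy)

/-- `p̂_D` large scale regularity: for `k ≥ 2` and a downward
directed graph `G = (N^k, Θ)` there is an infinite `H ⊆ N` (with least element
`h_0 = sInf H`) such that, with `D = H^k`, every `z ∈ D` satisfies either
`p̂_D(z) = h_0 < min(z)` or `p̂_D(z) ≥ min(z)`; consequently `p̂_D` has at most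
one significant label. -/
theorem stmt1 (k : ℕ) (hk : 2 ≤ k) (Θ : Set ((Fin k → ℕ) × (Fin k → ℕ)))
    (hΘ : Downward Θ) :
    ∃ H : Set ℕ, H.Infinite ∧
      (∀ z : Fin k → ℕ, (∀ i, z i ∈ H) →
        (phatD Θ {x | ∀ i, x i ∈ H} z = sInf H ∧ sInf H < minv z) ∨
        minv z ≤ phatD Θ {x | ∀ i, x i ∈ H} z) ∧
      {n : ℕ | ∃ z : Fin k → ℕ, (∀ i, z i ∈ H) ∧
        phatD Θ {x | ∀ i, x i ∈ H} z = n ∧ n < minv z}.Subsingleton := by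
  obtain ⟨H, hH, hinv⟩ := invariant_set k Θ
  have i0 : Fin k := ⟨0, by omega⟩
  have main : ∀ z : Fin k → ℕ, (∀ i, z i ∈ H) →
        (phatD Θ {x | ∀ i, x i ∈ H} z = sInf H ∧ sInf H < minv z) ∨
        minv z ≤ phatD Θ {x | ∀ i, x i ∈ H} z := by
    intro z hz
    by_cases hcase : minv z ≤ phatD Θ {x | ∀ i, x i ∈ H} z
    · exact Or.inr hcase
    left
    by_cases ht : TerminalV Θ {x | ∀ i, x i ∈ H} z
    · exfalso
      apply hcase
      rw [phatD, if_pos ht]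
      exact (minv_le' z i0).trans (Finset.le_sup (f := z) (Finset.mem_univ i0))
    rw [phatD, if_neg ht] at hcase ⊢
    have hlow : ∀ w, PathFrom Θ {x | ∀ i, x i ∈ H} z w →
        pD Θ {x | ∀ i, x i ∈ H} z ≤ minv w := fun w hw => Nat.sInf_le ⟨w, hw, rfl⟩
    have hne : {n | ∃ x ∈ PD Θ {x | ∀ i, x i ∈ H} z, minv x = n}.Nonempty :=
      ⟨minv z, z, ⟨[z], ⟨by simp, by simp, by simpa using hz, List.IsChain.singleton _⟩,
        by simp, by simp⟩, rfl⟩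
    obtain ⟨x, ⟨l, hl, hlz, hlx⟩, hxm⟩ := Nat.sInf_mem hne
    change minv x = pD Θ {x | ∀ i, x i ∈ H} z at hxm
    generalize hm : pD Θ {x | ∀ i, x i ∈ H} z = m at *
    have hxr : minv x ∈ Set.range x := Nat.sInf_mem ⟨x i0, i0, rfl⟩
    obtain ⟨j, hj⟩ := hxr
    rw [hxm] at hj
    have hxl : x ∈ l := List.mem_of_getLast? hlx
    have hxH : ∀ w ∈ l, ∀ i, w i ∈ H := hl.2.2.1
    have hmH : m ∈ H := hj ▸ hxH x hxl j
    have h0 : sInf H ≤ m := Nat.sInf_le hmH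
    have h0H : sInf H ∈ H := Nat.sInf_mem hH.nonempty
    have hge : ∀ w ∈ l, ∀ i, m ≤ w i := fun w hw i =>
      (hlow w (path_prefix hl hlz hw)).trans (minv_le' w i)
    let φ : ℕ → ℕ := fun v => if v = m then sInf H else v
    have hφm : φ m = sInf H := by simp [φ]
    have hφlt : ∀ u v, m ≤ u → u < v → φ u < φ v := by
      intro u v hu huv
      simp only [φ]
      split_ifs <;> omega
    have hφH : ∀ v ∈ H, φ v ∈ H := by
      intro v hv
      simp only [φ]
      split_ifs
      · exact h0H
      · exact hv
    have hφz : φ ∘ z = z := by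
      funext i
      have := minv_le' z i
      simp only [φ, Function.comp]
      rw [if_neg (by omega)]
    have hpath : PathFrom Θ {x | ∀ i, x i ∈ H} (φ ∘ z) (φ ∘ x) := by
      refine path_map (fun w => φ ∘ w) hl hlz hlx ?_ ?_ ?_
      · exact fun w hw i => hφH _ (hxH w hw i)
      · intro u hu v hv huv
        funext i
        have h1 : φ (u i) = φ (v i) := congrFun huv i
        have hu1 := hge u hu i
        have hv1 := hge v hv i
        rcases lt_trichotomy (u i) (v i) with h | h | h
        · have := hφlt _ _ hu1 h; omega
        · exact h
        · have := hφlt _ _ hv1 h; omega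
      · intro u hu v hv huv
        refine hinv u v φ (hxH u hu) (hxH v hv) (fun i => hφH _ (hxH u hu i))
          (fun i => hφH _ (hxH v hv i)) ?_ huv
        rintro a b ha _ hab
        refine hφlt a b ?_ hab
        rcases ha with ⟨i, rfl⟩ | ⟨i, rfl⟩
        · exact hge u hu i
        · exact hge v hv i
    rw [hφz] at hpath
    have h1 := (hlow _ hpath).trans (minv_le' _ j)
    have h2 : (φ ∘ x) j = sInf H := by simp only [Function.comp]; rw [hj, hφm]
    rw [h2] at h1
    omega
  refine ⟨H, hH, main, ?_⟩
  rintro a ⟨z, hz, rfl, hlt⟩ b ⟨z', hz', rfl, hlt'⟩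
  rcases main z hz with h | h
  · rcases main z' hz' with h' | h'
    · rw [h.1, h'.1]
    · omega
  · omega
end

section
/- Let k ≥ 2 and let G = (N^k, Θ) be a downward directed graph. The family S = {t̂_D : D ⊆ N^k, D finite} of terminal path label functions is full, reflexive, and jump free. -/
open scoped Classical

/-- A function with a finite domain `dom ⊆ N^k` (values outside `dom` are irrelevant). -/
structure FinFn (k : ℕ) where
  dom : Finset (Fin k → ℕ)
  toFun : (Fin k → ℕ) → ℕ

/-- `field(D)`: the set of all coordinates of elements of `D`. -/
def fieldSet {k : ℕ} (D : Finset (Fin k → ℕ)) : Set ℕ :=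
  {n | ∃ z ∈ D, ∃ i : Fin k, z i = n}

/-- A family is full if every finite `D ⊆ N^k` is the domain of some member. -/
def FullFam {k : ℕ} (S : Set (FinFn k)) : Prop :=
  ∀ D : Finset (Fin k → ℕ), ∃ f ∈ S, f.dom = D

/-- A family is reflexive if each member takes values in the field of its domain. -/
def ReflexiveFam {k : ℕ} (S : Set (FinFn k)) : Prop :=
  ∀ f ∈ S, ∀ x ∈ f.dom, f.toFun x ∈ fieldSet f.dom

/-- The jump free condition: if `x ∈ A ∩ B`, `A_x ⊆ B_x`
(`D_x = {z ∈ D : max(z) < max(x)}`), and `f_A = f_B` on `A_x`,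
then `f_A(x) ≥ f_B(x)`. -/
def JumpFreeFam {k : ℕ} (S : Set (FinFn k)) : Prop :=
  ∀ fA ∈ S, ∀ fB ∈ S, ∀ x : Fin k → ℕ, x ∈ fA.dom → x ∈ fB.dom →
    (∀ z ∈ fA.dom, maxv z < maxv x → z ∈ fB.dom) →
    (∀ y ∈ fA.dom, maxv y < maxv x → fA.toFun y = fB.toFun y) →
    fB.toFun x ≤ fA.toFun x

/-- A family is decreasing if whenever `domain(f) ⊆ domain(g)` one has
`f(x) ≥ g(x)` for all `x ∈ domain(f)`. -/
def DecreasingFam {k : ℕ} (S : Set (FinFn k)) : Prop :=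
  ∀ f ∈ S, ∀ g ∈ S, f.dom ⊆ g.dom → ∀ x ∈ f.dom, g.toFun x ≤ f.toFun x

/-- The family `S = {t̂_D : D ⊆ N^k, D finite}` of terminal path label
functions, as functions with finite domains. -/
def tFam {k : ℕ} (Θ : Set ((Fin k → ℕ) × (Fin k → ℕ))) : Set (FinFn k) :=
  {f | ∃ D : Finset (Fin k → ℕ), f.dom = D ∧ f.toFun = fun z => tD Θ (↑D) z}

theorem nodup_of_chain {k : ℕ} {Θ : Set ((Fin k → ℕ) × (Fin k → ℕ))} (hΘ : Downward Θ)
    (l : List (Fin k → ℕ)) (h : l.IsChain (fun a b => (a, b) ∈ Θ)) : l.Nodup := by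
  have h1 : l.IsChain (fun a b => maxv b < maxv a) := h.imp (fun a b hab => hΘ _ hab)
  have : IsTrans (Fin k → ℕ) (fun a b => maxv b < maxv a) := ⟨fun a b c h1 h2 => lt_trans h2 h1⟩
  refine (List.isChain_iff_pairwise.mp h1).imp ?_
  rintro a b hab rfl
  exact lt_irrefl _ hab

theorem rtg_of_list {k : ℕ} {Θ : Set ((Fin k → ℕ) × (Fin k → ℕ))} {D : Set (Fin k → ℕ)}
    (l : List (Fin k → ℕ)) : ∀ z x, (∀ x ∈ l, x ∈ D) → l.IsChain (fun a b => (a, b) ∈ Θ) →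
    l.head? = some z → l.getLast? = some x → Relation.ReflTransGen (EdgeD Θ D) z x := by
  induction l with
  | nil => intro z x _ _ h; simp at h
  | cons a l ih =>
    intro z x hD hc hh hl
    simp only [List.head?_cons, Option.some.injEq] at hh
    subst hh
    cases l with
    | nil =>
      simp only [List.getLast?_singleton, Option.some.injEq] at hl
      subst hl
      exact .refl
    | cons b l =>
      rw [List.isChain_cons_cons] at hc
      refine .head ⟨hD _ (by simp), hD _ (by simp), hc.1⟩
        (ih b x (fun y hy => hD y (by simp [List.mem_cons] at hy ⊢; tauto)) hc.2 (by simp) ?_)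
      rw [List.getLast?_cons_cons] at hl
      exact hl

theorem list_of_rtg {k : ℕ} {Θ : Set ((Fin k → ℕ) × (Fin k → ℕ))} {D : Set (Fin k → ℕ)}
    {z x : Fin k → ℕ} (hz : z ∈ D) (h : Relation.ReflTransGen (EdgeD Θ D) z x) :
    ∃ l : List (Fin k → ℕ), l ≠ [] ∧ (∀ x ∈ l, x ∈ D) ∧ l.IsChain (fun a b => (a, b) ∈ Θ) ∧
    l.head? = some z ∧ l.getLast? = some x := by
  induction h with
  | refl => exact ⟨[z], by simp [hz]⟩
  | tail h1 h2 ih =>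
    rename_i b c
    obtain ⟨l, hne, hD, hc, hh, hl⟩ := ih
    refine ⟨l ++ [c], by simp, ?_, ?_, ?_, by simp⟩
    · intro y hy
      rcases List.mem_append.mp hy with hy | hy
      · exact hD y hy
      · simp only [List.mem_singleton] at hy
        subst hy
        exact h2.2.1
    · rw [List.isChain_append]
      refine ⟨hc, by simp, ?_⟩
      intro u hu v hv
      rw [hl] at hu
      simp only [Option.mem_def, Option.some.injEq, List.head?_cons] at hu hv
      subst hu hv
      exact h2.2.2
    · rw [List.head?_append, hh]; rfl

theorem rtg_mem {k : ℕ} {Θ : Set ((Fin k → ℕ) × (Fin k → ℕ))} {D : Set (Fin k → ℕ)}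
    (hΘ : Downward Θ) {z x : Fin k → ℕ} (hz : z ∈ D)
    (h : Relation.ReflTransGen (EdgeD Θ D) z x) : x ∈ D ∧ (x = z ∨ maxv x < maxv z) := by
  induction h with
  | refl => exact ⟨hz, Or.inl rfl⟩
  | tail h1 h2 ih =>
    refine ⟨h2.2.1, Or.inr ?_⟩
    have := hΘ _ h2.2.2
    simp only at this
    rcases ih.2 with h | h
    · rw [← h]; exact this
    · omega

theorem mem_TD {k : ℕ} {Θ : Set ((Fin k → ℕ) × (Fin k → ℕ))} (hΘ : Downward Θ)
    {D : Set (Fin k → ℕ)} {z x : Fin k → ℕ} (hz : z ∈ D) :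
    x ∈ TD Θ D z ↔ Relation.ReflTransGen (EdgeD Θ D) z x ∧ TerminalV Θ D x := by
  constructor
  · rintro ⟨l, ⟨⟨hne, _, hD, hc⟩, ht⟩, hh, hl⟩
    refine ⟨rtg_of_list l z x hD hc hh hl, ?_⟩
    intro y hy
    have hc' : (l ++ [y]).IsChain (fun a b => (a, b) ∈ Θ) := by
      rw [List.isChain_append]
      refine ⟨hc, by simp, ?_⟩
      intro u hu v hv
      rw [hl] at hu
      simp only [Option.mem_def, Option.some.injEq, List.head?_cons] at hu hv
      subst hu hv
      exact hy.2.2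
    refine ht y ⟨by simp, nodup_of_chain hΘ _ hc', ?_, hc'⟩
    intro w hw
    rcases List.mem_append.mp hw with hw | hw
    · exact hD w hw
    · simp only [List.mem_singleton] at hw
      subst hw
      exact hy.2.1
  · rintro ⟨h, ht⟩
    obtain ⟨l, hne, hD, hc, hh, hl⟩ := list_of_rtg hz h
    refine ⟨l, ⟨⟨hne, nodup_of_chain hΘ _ hc, hD, hc⟩, ?_⟩, hh, hl⟩
    rintro y ⟨_, _, hD', hc'⟩
    have hc'' : (l ++ [y]).IsChain (fun a b => (a, b) ∈ Θ) := hc'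
    rw [List.isChain_append] at hc''
    exact ht y ⟨(rtg_mem hΘ hz h).1, hD' y (by simp), hc''.2.2 x (by simp [hl]) y (by simp)⟩

theorem exists_term {k : ℕ} {Θ : Set ((Fin k → ℕ) × (Fin k → ℕ))} (hΘ : Downward Θ)
    (D : Set (Fin k → ℕ)) : ∀ (n : ℕ) (z : Fin k → ℕ), maxv z = n →
    ∃ x, Relation.ReflTransGen (EdgeD Θ D) z x ∧ TerminalV Θ D x := by
  intro n
  induction n using Nat.strong_induction_on with
  | _ n ih =>
    intro z hz
    by_cases ht : TerminalV Θ D z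
    · exact ⟨z, .refl, ht⟩
    · unfold TerminalV at ht
      push Not at ht
      obtain ⟨y, hy⟩ := ht
      obtain ⟨x, hx, hxt⟩ := ih (maxv y) (hz ▸ hΘ _ hy.2.2) y rfl
      exact ⟨x, .head hy hx, hxt⟩

theorem minv_mem {k : ℕ} (hk : 2 ≤ k) (z : Fin k → ℕ) : ∃ i, z i = minv z := by
  have : (Set.range z).Nonempty := ⟨z ⟨0, by omega⟩, ⟨_, rfl⟩⟩
  exact Nat.sInf_mem this

theorem maxv_mem {k : ℕ} (hk : 2 ≤ k) (z : Fin k → ℕ) : ∃ i, z i = maxv z := by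
  have : Nonempty (Fin k) := ⟨⟨0, by omega⟩⟩
  obtain ⟨i, _, hi⟩ := Finset.exists_mem_eq_sup Finset.univ Finset.univ_nonempty z
  exact ⟨i, hi.symm⟩

theorem minv_le_maxv {k : ℕ} (hk : 2 ≤ k) (z : Fin k → ℕ) : minv z ≤ maxv z := by
  obtain ⟨i, hi⟩ := minv_mem hk z
  rw [← hi]
  exact Finset.le_sup (f := z) (Finset.mem_univ i)

/-- At a nonterminal vertex the label is attained at a terminal reachable vertex. -/
theorem tD_attained {k : ℕ} {Θ : Set ((Fin k → ℕ) × (Fin k → ℕ))} (hΘ : Downward Θ)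
    {D : Set (Fin k → ℕ)} {z : Fin k → ℕ} (hz : z ∈ D) (ht : ¬ TerminalV Θ D z) :
    ∃ x, Relation.ReflTransGen (EdgeD Θ D) z x ∧ TerminalV Θ D x ∧ x ∈ D ∧
      maxv x < maxv z ∧ tD Θ D z = minv x := by
  obtain ⟨w, hw⟩ := exists_term hΘ D _ z rfl
  have hne : {n | ∃ x ∈ TD Θ D z, minv x = n}.Nonempty := ⟨_, w, (mem_TD hΘ hz).2 hw, rfl⟩
  obtain ⟨x, hx, hxn⟩ := Nat.sInf_mem hne
  rw [mem_TD hΘ hz] at hx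
  obtain ⟨hD, h⟩ := rtg_mem hΘ hz hx.1
  refine ⟨x, hx.1, hx.2, hD, ?_, ?_⟩
  · rcases h with h | h
    · exact absurd (h ▸ hx.2) ht
    · exact h
  · rw [tD, if_neg ht, hxn]

theorem tD_le {k : ℕ} {Θ : Set ((Fin k → ℕ) × (Fin k → ℕ))} (hΘ : Downward Θ)
    {D : Set (Fin k → ℕ)} {z x : Fin k → ℕ} (hz : z ∈ D) (ht : ¬ TerminalV Θ D z)
    (h : Relation.ReflTransGen (EdgeD Θ D) z x) (hx : TerminalV Θ D x) :
    tD Θ D z ≤ minv x := by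
  rw [tD, if_neg ht]
  exact Nat.sInf_le ⟨x, (mem_TD hΘ hz).2 ⟨h, hx⟩, rfl⟩

theorem rtg_transfer {k : ℕ} {Θ : Set ((Fin k → ℕ) × (Fin k → ℕ))} (hΘ : Downward Θ)
    {A B : Set (Fin k → ℕ)} {z x : Fin k → ℕ} (hA : z ∈ A) (hB : z ∈ B)
    (hAB : ∀ y ∈ A, maxv y < maxv z → y ∈ B)
    (h : Relation.ReflTransGen (EdgeD Θ A) z x) : Relation.ReflTransGen (EdgeD Θ B) z x := by
  have key : ∀ y, Relation.ReflTransGen (EdgeD Θ A) z y → y ∈ B := by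
    intro y hy
    obtain ⟨h1, h2⟩ := rtg_mem hΘ hA hy
    rcases h2 with rfl | h2
    · exact hB
    · exact hAB y h1 h2
  induction h with
  | refl => exact .refl
  | tail h1 h2 ih => exact ih.tail ⟨key _ h1, key _ (h1.tail h2), h2.2.2⟩

/-- for `k ≥ 2` and a downward directed graph `G = (N^k, Θ)`,
the family `S = {t̂_D : D ⊆ N^k, D finite}` is full, reflexive and jump free. -/
theorem stmt3 (k : ℕ) (hk : 2 ≤ k) (Θ : Set ((Fin k → ℕ) × (Fin k → ℕ)))
    (hΘ : Downward Θ) :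
    FullFam (tFam Θ) ∧ ReflexiveFam (tFam Θ) ∧ JumpFreeFam (tFam Θ) := by
  refine ⟨?_, ?_, ?_⟩
  · intro D
    exact ⟨⟨D, fun z => tD Θ (↑D) z⟩, ⟨D, rfl, rfl⟩, rfl⟩
  · rintro ⟨D', f⟩ ⟨D, h1, h2⟩ x hx
    simp only at h1 h2 hx ⊢
    subst h1 h2
    beta_reduce
    by_cases ht : TerminalV Θ (↑D') x
    · obtain ⟨i, hi⟩ := maxv_mem hk x
      exact ⟨x, hx, i, by simp only [tD, if_pos ht, hi]⟩
    · obtain ⟨y, _, _, hyD, _, hy⟩ := tD_attained hΘ (Finset.mem_coe.2 hx) ht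
      obtain ⟨i, hi⟩ := minv_mem hk y
      exact ⟨y, hyD, i, by rw [hi, hy]⟩
  · rintro ⟨A, f⟩ ⟨A', h1, h2⟩ ⟨B, g⟩ ⟨B', h3, h4⟩ x hxA hxB hsub heq
    simp only at h1 h2 h3 h4 hxA hxB hsub heq ⊢
    subst h1 h2 h3 h4
    beta_reduce at heq ⊢
    have hxA' : x ∈ (A : Set (Fin k → ℕ)) := hxA
    have hxB' : x ∈ (B : Set (Fin k → ℕ)) := hxB
    by_cases htA : TerminalV Θ (↑A) x
    · have e : tD Θ (↑A) x = maxv x := by rw [tD, if_pos htA]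
      rw [e]
      by_cases htB : TerminalV Θ (↑B) x
      · rw [tD, if_pos htB]
      · obtain ⟨y, _, _, _, hlt, hy⟩ := tD_attained hΘ hxB' htB
        have := minv_le_maxv hk y
        omega
    · obtain ⟨y, hr, hyt, hyA, hlt, hy⟩ := tD_attained hΘ hxA' htA
      have hyB : TerminalV Θ (↑B) y := by
        by_contra hcon
        have hyB' : y ∈ (B : Set (Fin k → ℕ)) := hsub y hyA hlt
        obtain ⟨w, _, _, _, hwlt, hw⟩ := tD_attained hΘ hyB' hcon
        have e := heq y hyA hlt
        have e2 : tD Θ (↑A) y = maxv y := by rw [tD, if_pos hyt]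
        have := minv_le_maxv hk w
        omega
      have htB : ¬ TerminalV Θ (↑B) x := by
        intro hcon
        unfold TerminalV at htA
        push Not at htA
        obtain ⟨v, hv⟩ := htA
        exact hcon v ⟨hxB', hsub v hv.2.1 (hΘ _ hv.2.2), hv.2.2⟩
      rw [hy]
      exact tD_le hΘ hxB' htB (rtg_transfer hΘ hxA' hxB' hsub hr) hyB
end

section
/- Let k ≥ 2, r ≥ 1, let G = (N^k, Θ) be a downward directed graph, and let F : N^k × (N^k × N)^r → N be a partial selection function. The family S = {ŝ_D : D ⊆ N^k, D finite} is full, reflexive, and jump free. -/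
open scoped Classical

/-- One step of the recursion defining `Φ^D_z`: given the pair
`prev y = (value at y, Φ^D_y ≠ ∅)` for vertices `y` below `z`, this is the set of
defined values `F[z, (y_1,n_1), …, (y_r,n_r)]` with each `y_i ∈ G_D^z` and
`n_i = prev(y_i).1` if `Φ^D_{y_i} ≠ ∅`, `n_i = min(y_i)` if `Φ^D_{y_i} = ∅`. -/
def PhiStep {k r : ℕ} (Θ : Set ((Fin k → ℕ) × (Fin k → ℕ))) (D : Set (Fin k → ℕ))
    (F : (Fin k → ℕ) → (Fin r → (Fin k → ℕ) × ℕ) → Option ℕ)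
    (prev : (Fin k → ℕ) → ℕ × Prop) (z : Fin k → ℕ) : Set ℕ :=
  {n | ∃ w : Fin r → (Fin k → ℕ) × ℕ,
    (∀ i : Fin r, (z ∈ D ∧ (w i).1 ∈ D ∧ (z, (w i).1) ∈ Θ) ∧
      (w i).2 = if (prev ((w i).1)).2 then (prev ((w i).1)).1 else minv ((w i).1)) ∧
    F z w = some n}

/-- Fuel-based recursion computing `(ŝ_D(z), Φ^D_z ≠ ∅)`; since `G` is downward
directed, fuel `max(z)` suffices, see `sD` and `PhiNEs`. -/
noncomputable def sAuxN {k r : ℕ} (Θ : Set ((Fin k → ℕ) × (Fin k → ℕ)))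
    (D : Set (Fin k → ℕ)) (F : (Fin k → ℕ) → (Fin r → (Fin k → ℕ) × ℕ) → Option ℕ) :
    ℕ → (Fin k → ℕ) → ℕ × Prop
  | 0, z =>
      (if (PhiStep Θ D F (fun y => (maxv y, False)) z).Nonempty then
        sInf (PhiStep Θ D F (fun y => (maxv y, False)) z)
      else maxv z,
      (PhiStep Θ D F (fun y => (maxv y, False)) z).Nonempty)
  | (m + 1), z =>
      (if (PhiStep Θ D F (sAuxN Θ D F m) z).Nonempty then
        sInf (PhiStep Θ D F (sAuxN Θ D F m) z)
      else maxv z,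
      (PhiStep Θ D F (sAuxN Θ D F m) z).Nonempty)

/-- `ŝ_D(z)`: `max(z)` if `Φ^D_z = ∅`, else `min(Φ^D_z)`. -/
noncomputable def sD {k r : ℕ} (Θ : Set ((Fin k → ℕ) × (Fin k → ℕ)))
    (D : Set (Fin k → ℕ)) (F : (Fin k → ℕ) → (Fin r → (Fin k → ℕ) × ℕ) → Option ℕ)
    (z : Fin k → ℕ) : ℕ :=
  (sAuxN Θ D F (maxv z) z).1

/-- The statement `Φ^D_z ≠ ∅` (computed along the recursion for `ŝ_D`). -/
def PhiNEs {k r : ℕ} (Θ : Set ((Fin k → ℕ) × (Fin k → ℕ)))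
    (D : Set (Fin k → ℕ)) (F : (Fin k → ℕ) → (Fin r → (Fin k → ℕ) × ℕ) → Option ℕ)
    (z : Fin k → ℕ) : Prop :=
  (sAuxN Θ D F (maxv z) z).2

/-- The set `Φ^D_z` for the recursion defining `ŝ_D`. -/
def PhiD {k r : ℕ} (Θ : Set ((Fin k → ℕ) × (Fin k → ℕ)))
    (D : Set (Fin k → ℕ)) (F : (Fin k → ℕ) → (Fin r → (Fin k → ℕ) × ℕ) → Option ℕ)
    (z : Fin k → ℕ) : Set ℕ :=
  PhiStep Θ D F (fun y => (sD Θ D F y, PhiNEs Θ D F y)) z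

/-- Fuel-based recursion computing `(h^ρ_D(z), Φ^D_z ≠ ∅)`: same recursion as for
`ŝ_D` except that the value is `ρ(z)` when `Φ^D_z = ∅`. -/
noncomputable def hAuxN {k r : ℕ} (Θ : Set ((Fin k → ℕ) × (Fin k → ℕ)))
    (D : Set (Fin k → ℕ)) (F : (Fin k → ℕ) → (Fin r → (Fin k → ℕ) × ℕ) → Option ℕ)
    (ρ : (Fin k → ℕ) → ℕ) : ℕ → (Fin k → ℕ) → ℕ × Prop
  | 0, z =>
      (if (PhiStep Θ D F (fun y => (maxv y, False)) z).Nonempty then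
        sInf (PhiStep Θ D F (fun y => (maxv y, False)) z)
      else ρ z,
      (PhiStep Θ D F (fun y => (maxv y, False)) z).Nonempty)
  | (m + 1), z =>
      (if (PhiStep Θ D F (hAuxN Θ D F ρ m) z).Nonempty then
        sInf (PhiStep Θ D F (hAuxN Θ D F ρ m) z)
      else ρ z,
      (PhiStep Θ D F (hAuxN Θ D F ρ m) z).Nonempty)

/-- `h^ρ_D(z)`: `ρ(z)` if `Φ^D_z = ∅`, else `min(Φ^D_z)`. -/
noncomputable def hRD {k r : ℕ} (Θ : Set ((Fin k → ℕ) × (Fin k → ℕ)))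
    (D : Set (Fin k → ℕ)) (F : (Fin k → ℕ) → (Fin r → (Fin k → ℕ) × ℕ) → Option ℕ)
    (ρ : (Fin k → ℕ) → ℕ) (z : Fin k → ℕ) : ℕ :=
  (hAuxN Θ D F ρ (maxv z) z).1

/-- The statement `Φ^D_z ≠ ∅` (computed along the recursion for `h^ρ_D`). -/
def PhiNEh {k r : ℕ} (Θ : Set ((Fin k → ℕ) × (Fin k → ℕ)))
    (D : Set (Fin k → ℕ)) (F : (Fin k → ℕ) → (Fin r → (Fin k → ℕ) × ℕ) → Option ℕ)
    (ρ : (Fin k → ℕ) → ℕ) (z : Fin k → ℕ) : Prop :=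
  (hAuxN Θ D F ρ (maxv z) z).2

/-- The set `Φ^D_z` for the recursion defining `h^ρ_D`. -/
def PhiDh {k r : ℕ} (Θ : Set ((Fin k → ℕ) × (Fin k → ℕ)))
    (D : Set (Fin k → ℕ)) (F : (Fin k → ℕ) → (Fin r → (Fin k → ℕ) × ℕ) → Option ℕ)
    (ρ : (Fin k → ℕ) → ℕ) (z : Fin k → ℕ) : Set ℕ :=
  PhiStep Θ D F (fun y => (hRD Θ D F ρ y, PhiNEh Θ D F ρ y)) z

/-- The family `S = {ŝ_D : D ⊆ N^k, D finite}`, as functions with finite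
domains. -/
def sFam {k r : ℕ} (Θ : Set ((Fin k → ℕ) × (Fin k → ℕ)))
    (F : (Fin k → ℕ) → (Fin r → (Fin k → ℕ) × ℕ) → Option ℕ) : Set (FinFn k) :=
  {f | ∃ D : Finset (Fin k → ℕ), f.dom = D ∧ f.toFun = sD Θ (↑D) F}

/-- `PhiStep` only depends on `prev` at vertices below `z`. -/
theorem PhiStep_congr {k r : ℕ} {Θ : Set ((Fin k → ℕ) × (Fin k → ℕ))} (hΘ : Downward Θ)
    (D : Set (Fin k → ℕ)) (F : (Fin k → ℕ) → (Fin r → (Fin k → ℕ) × ℕ) → Option ℕ)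
    (p q : (Fin k → ℕ) → ℕ × Prop) (z : Fin k → ℕ)
    (h : ∀ y, maxv y < maxv z → p y = q y) : PhiStep Θ D F p z = PhiStep Θ D F q z := by
  ext n
  constructor
  · rintro ⟨w, hw, hn⟩
    refine ⟨w, fun i => ⟨(hw i).1, ?_⟩, hn⟩
    rw [← h _ (hΘ _ (hw i).1.2.2)]
    exact (hw i).2
  · rintro ⟨w, hw, hn⟩
    refine ⟨w, fun i => ⟨(hw i).1, ?_⟩, hn⟩
    rw [h _ (hΘ _ (hw i).1.2.2)]
    exact (hw i).2

theorem sAuxN_eq {k r : ℕ} {Θ : Set ((Fin k → ℕ) × (Fin k → ℕ))} (hΘ : Downward Θ)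
    (D : Set (Fin k → ℕ)) (F : (Fin k → ℕ) → (Fin r → (Fin k → ℕ) × ℕ) → Option ℕ) (n : ℕ) :
    ∀ z, maxv z ≤ n → sAuxN Θ D F n z =
      (if (PhiD Θ D F z).Nonempty then sInf (PhiD Θ D F z) else maxv z,
        (PhiD Θ D F z).Nonempty) := by
  induction n using Nat.strong_induction_on with
  | _ n ih =>
    intro z hz
    cases n with
    | zero =>
      have e : PhiStep Θ D F (fun y => (maxv y, False)) z = PhiD Θ D F z :=
        PhiStep_congr hΘ D F _ _ z (fun y hy => by omega)
      rw [sAuxN, e]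
    | succ m =>
      have e : PhiStep Θ D F (sAuxN Θ D F m) z = PhiD Θ D F z := by
        refine PhiStep_congr hΘ D F _ _ z (fun y hy => ?_)
        have h1 := ih m (by omega) y (by omega)
        have h2 := ih (maxv y) (by omega) y le_rfl
        rw [h1, ← h2]
        rfl
      rw [sAuxN, e]

theorem sD_eq {k r : ℕ} {Θ : Set ((Fin k → ℕ) × (Fin k → ℕ))} (hΘ : Downward Θ)
    (D : Set (Fin k → ℕ)) (F : (Fin k → ℕ) → (Fin r → (Fin k → ℕ) × ℕ) → Option ℕ)
    (z : Fin k → ℕ) : sD Θ D F z =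
      if (PhiD Θ D F z).Nonempty then sInf (PhiD Θ D F z) else maxv z := by
  rw [sD, sAuxN_eq hΘ D F _ z le_rfl]

theorem PhiNEs_iff {k r : ℕ} {Θ : Set ((Fin k → ℕ) × (Fin k → ℕ))} (hΘ : Downward Θ)
    (D : Set (Fin k → ℕ)) (F : (Fin k → ℕ) → (Fin r → (Fin k → ℕ) × ℕ) → Option ℕ)
    (z : Fin k → ℕ) : PhiNEs Θ D F z ↔ (PhiD Θ D F z).Nonempty := by
  rw [PhiNEs, sAuxN_eq hΘ D F _ z le_rfl]

/-- Elements of `Φ^D_z` come from vertices below. -/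
theorem PhiD_mem {k r : ℕ} {Θ : Set ((Fin k → ℕ) × (Fin k → ℕ))} (hΘ : Downward Θ)
    (D : Set (Fin k → ℕ)) (F : (Fin k → ℕ) → (Fin r → (Fin k → ℕ) × ℕ) → Option ℕ)
    (hF : ∀ z w n, F z w = some n → ∃ i : Fin r, n = (w i).2)
    (z : Fin k → ℕ) (n : ℕ) (hn : n ∈ PhiD Θ D F z) :
    ∃ y ∈ D, maxv y < maxv z ∧
      n = if (PhiD Θ D F y).Nonempty then sD Θ D F y else minv y := by
  obtain ⟨w, hw, hv⟩ := hn
  obtain ⟨i, hi⟩ := hF _ _ _ hv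
  refine ⟨(w i).1, (hw i).1.2.1, hΘ _ (hw i).1.2.2, ?_⟩
  rw [hi, (hw i).2]
  simp only [PhiNEs_iff hΘ]

theorem sD_lt {k r : ℕ} (hk : 2 ≤ k) {Θ : Set ((Fin k → ℕ) × (Fin k → ℕ))} (hΘ : Downward Θ)
    (D : Set (Fin k → ℕ)) (F : (Fin k → ℕ) → (Fin r → (Fin k → ℕ) × ℕ) → Option ℕ)
    (hF : ∀ z w n, F z w = some n → ∃ i : Fin r, n = (w i).2) (m : ℕ) :
    ∀ z, maxv z = m → (PhiD Θ D F z).Nonempty → sD Θ D F z < maxv z := by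
  induction m using Nat.strong_induction_on with
  | _ m ih =>
    intro z hz hne
    rw [sD_eq hΘ, if_pos hne]
    obtain ⟨y, -, hy, e⟩ := PhiD_mem hΘ D F hF z _ (Nat.sInf_mem hne)
    rw [e]
    split_ifs with h
    · exact (ih _ (hz ▸ hy) y rfl h).trans hy
    · exact (minv_le_maxv hk y).trans_lt hy

theorem PhiD_nonempty_iff {k r : ℕ} (hk : 2 ≤ k) {Θ : Set ((Fin k → ℕ) × (Fin k → ℕ))}
    (hΘ : Downward Θ)
    (D : Set (Fin k → ℕ)) (F : (Fin k → ℕ) → (Fin r → (Fin k → ℕ) × ℕ) → Option ℕ)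
    (hF : ∀ z w n, F z w = some n → ∃ i : Fin r, n = (w i).2) (z : Fin k → ℕ) :
    (PhiD Θ D F z).Nonempty ↔ sD Θ D F z < maxv z := by
  refine ⟨sD_lt hk hΘ D F hF _ z rfl, fun h => ?_⟩
  by_contra hne
  rw [sD_eq hΘ, if_neg hne] at h
  exact lt_irrefl _ h

theorem sD_mem_field {k r : ℕ} (hk : 2 ≤ k) {Θ : Set ((Fin k → ℕ) × (Fin k → ℕ))}
    (hΘ : Downward Θ)
    (D : Finset (Fin k → ℕ)) (F : (Fin k → ℕ) → (Fin r → (Fin k → ℕ) × ℕ) → Option ℕ)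
    (hF : ∀ z w n, F z w = some n → ∃ i : Fin r, n = (w i).2) (m : ℕ) :
    ∀ z ∈ D, maxv z = m → sD Θ (↑D) F z ∈ fieldSet D := by
  induction m using Nat.strong_induction_on with
  | _ m ih =>
    intro z hzD hz
    rw [sD_eq hΘ]
    by_cases hne : (PhiD Θ (↑D) F z).Nonempty
    · rw [if_pos hne]
      obtain ⟨y, hyD, hy, e⟩ := PhiD_mem hΘ (↑D) F hF z _ (Nat.sInf_mem hne)
      rw [e]
      split_ifs with h
      · exact ih _ (hz ▸ hy) y (by simpa using hyD) rfl
      · exact ⟨y, by simpa using hyD, minv_mem hk y⟩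
    · rw [if_neg hne]
      exact ⟨z, hzD, maxv_mem hk z⟩

/-- for `k ≥ 2`, `r ≥ 1`, a downward directed graph
`G = (N^k, Θ)` and a partial selection function `F`, the family
`S = {ŝ_D : D ⊆ N^k, D finite}` is full, reflexive and jump free. -/
theorem stmt4 (k r : ℕ) (hk : 2 ≤ k) (hr : 1 ≤ r)
    (Θ : Set ((Fin k → ℕ) × (Fin k → ℕ))) (hΘ : Downward Θ)
    (F : (Fin k → ℕ) → (Fin r → (Fin k → ℕ) × ℕ) → Option ℕ)
    (hF : ∀ z w n, F z w = some n → ∃ i : Fin r, n = (w i).2) :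
    FullFam (sFam Θ F) ∧ ReflexiveFam (sFam Θ F) ∧ JumpFreeFam (sFam Θ F) := by
  refine ⟨fun D => ⟨⟨D, sD Θ (↑D) F⟩, ⟨D, rfl, rfl⟩, rfl⟩, ?_, ?_⟩
  · rintro ⟨fd, ff⟩ ⟨D, h1, h2⟩ x hx
    dsimp only at h1 h2 hx ⊢
    subst h1 h2
    exact sD_mem_field hk hΘ fd F hF _ x hx rfl
  · rintro ⟨A, fA⟩ ⟨A', h1, h2⟩ ⟨B, fB⟩ ⟨B', h3, h4⟩ x hxA hxB hsub heq
    dsimp only at h1 h2 h3 h4 hxA hxB hsub heq ⊢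
    subst h1 h2 h3 h4
    have hle : ∀ D : Set (Fin k → ℕ), sD Θ D F x ≤ maxv x := by
      intro D
      by_cases hne : (PhiD Θ D F x).Nonempty
      · exact (sD_lt hk hΘ D F hF _ x rfl hne).le
      · rw [sD_eq hΘ, if_neg hne]
    by_cases hne : (PhiD Θ (↑A) F x).Nonempty
    · have hss : PhiD Θ (↑A) F x ⊆ PhiD Θ (↑B) F x := by
        rintro n ⟨w, hw, hn⟩
        refine ⟨w, fun i => ?_, hn⟩
        obtain ⟨⟨-, hyA, hedge⟩, hv⟩ := hw i
        have hlt : maxv (w i).1 < maxv x := hΘ _ hedge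
        have hyA' : (w i).1 ∈ A := by simpa using hyA
        have hyB := hsub _ hyA' hlt
        refine ⟨⟨by simpa using hxB, by simpa using hyB, hedge⟩, ?_⟩
        rw [hv]
        simp only [PhiNEs_iff hΘ, PhiD_nonempty_iff hk hΘ _ F hF, heq _ hyA' hlt]
      rw [sD_eq hΘ (↑A) F x, sD_eq hΘ (↑B) F x, if_pos hne, if_pos (hne.mono hss)]
      exact Nat.sInf_le (hss (Nat.sInf_mem hne))
    · rw [sD_eq hΘ (↑A) F x, if_neg hne]
      exact hle _
end
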